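/- Let α and β be real numbers with 0 < α < 1 and 0 < β < 1, and let x be a complex number with Re(x) > 0. Define, for m ≥ 1, κ_{2m} = (2m−α−β)(2m−1+α)(2m−1+β)/(4(2m−1)) and κ_{2m−1} = (2m−2+α+β)(2m−1−α)(2m−1−β)/(4(2m−1)). Then the continued fraction x/2 + K_{m=1}^∞(κ_m/x) (all partial denominators after the initial term equal to x) converges to a nonzero value v, and Γ((x−α+1)/2)·Γ((x+α+β)/2)·Γ((x−β+1)/2) / [Γ((x+α+1)/2)·Γ((x−α−β+2)/2)·Γ((x+β+1)/2)] = 1/v. -/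

import Mathlib

open Filter

noncomputable def cfA (a b : ℕ → ℂ) : ℕ → ℂ
  | 0 => 1
  | 1 => b 0
  | n + 2 => b (n + 1) * cfA a b (n + 1) + a (n + 1) * cfA a b n

noncomputable def cfB (a b : ℕ → ℂ) : ℕ → ℂ
  | 0 => 0
  | 1 => 1
  | n + 2 => b (n + 1) * cfB a b (n + 1) + a (n + 1) * cfB a b n

/-- The continued fraction `b 0 + K_{n=1}^∞ (a n / b n)` converges to `v`. -/
def CFConvergesTo (a b : ℕ → ℂ) (v : ℂ) : Prop :=
  (∀ᶠ n in atTop, cfB a b n ≠ 0) ∧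
    Tendsto (fun n => cfA a b n / cfB a b n) atTop (nhds v)

/-- `κ_{2m} = (2m−α−β)(2m−1+α)(2m−1+β)/(4(2m−1))`,
`κ_{2m−1} = (2m−2+α+β)(2m−1−α)(2m−1−β)/(4(2m−1))`. -/
noncomputable def aSeq (α β : ℝ) : ℕ → ℂ := fun n =>
  if n % 2 = 0 then
    ((n : ℂ) - α - β) * ((n : ℂ) - 1 + α) * ((n : ℂ) - 1 + β) / (4 * ((n : ℂ) - 1))
  else
    ((n : ℂ) - 1 + α + β) * ((n : ℂ) - α) * ((n : ℂ) - β) / (4 * (n : ℂ))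

/-- `b_0 = x/2`, and all later partial denominators equal `x`. -/
noncomputable def bSeq (x : ℂ) : ℕ → ℂ := fun n => if n = 0 then x / 2 else x


/-- Abstract setting: positive coefficients `k`, numerators `A`, denominators `B`. -/
structure CFD (k : ℕ → ℝ) (x : ℂ) (A B : ℕ → ℂ) : Prop where
  kpos : ∀ n, 0 < k (n + 1)
  kle : ∀ n : ℕ, k (n + 1) ≤ ((n : ℝ) + 1) ^ 2
  hx : 0 < x.re
  A0 : A 0 = 1
  A1 : A 1 = x / 2
  AR : ∀ n, A (n + 2) = x * A (n + 1) + k (n + 1) * A n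
  B0 : B 0 = 0
  B1 : B 1 = 1
  BR : ∀ n, B (n + 2) = x * B (n + 1) + k (n + 1) * B n

noncomputable def Kp (k : ℕ → ℝ) (n : ℕ) : ℝ := ∏ j ∈ Finset.range n, k (j + 1)

noncomputable def En (B : ℕ → ℂ) (n : ℕ) : ℝ := (B (n + 1)).re * (B n).re + (B (n + 1)).im * (B n).im

noncomputable def en (k : ℕ → ℝ) (B : ℕ → ℂ) (n : ℕ) : ℝ := En B n / Kp k n

namespace CFD

variable {k : ℕ → ℝ} {x : ℂ} {A B : ℕ → ℂ}

lemma Kpos (h : CFD k x A B) (n : ℕ) : 0 < Kp k n :=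
  Finset.prod_pos (fun j _ => h.kpos j)

lemma Ksucc (k : ℕ → ℝ) (n : ℕ) : Kp k (n + 1) = Kp k n * k (n + 1) := by
  simp [Kp, Finset.prod_range_succ]

lemma Esucc (h : CFD k x A B) (n : ℕ) :
    En B (n + 1) = x.re * ‖B (n + 1)‖ ^ 2 + k (n + 1) * En B n := by
  have := h.BR n
  rw [Complex.sq_norm, Complex.normSq_apply]
  simp only [En]
  rw [show n + 1 + 1 = n + 2 from rfl, this]
  simp
  ring

lemma esucc (h : CFD k x A B) (n : ℕ) :
    en k B (n + 1) = en k B n + x.re * ‖B (n + 1)‖ ^ 2 / Kp k (n + 1) := by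
  have h1 := (h.Kpos n).ne'
  have h2 := (h.kpos n).ne'
  rw [en, en, h.Esucc, Ksucc]
  field_simp
  ring

lemma emono (h : CFD k x A B) : Monotone (en k B) := by
  apply monotone_nat_of_le_succ
  intro n
  rw [h.esucc]
  have := h.Kpos (n + 1)
  have := h.hx
  have : 0 ≤ x.re * ‖B (n + 1)‖ ^ 2 / Kp k (n + 1) := by positivity
  linarith

lemma e0 (h : CFD k x A B) : en k B 0 = 0 := by
  simp [en, En, h.B0]

lemma e1pos (h : CFD k x A B) : 0 < en k B 1 := by
  have := h.esucc 0
  rw [h.e0] at this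
  rw [this]
  simp only [zero_add, h.B1]
  have := h.Kpos 1
  have := h.hx
  simp
  positivity

lemma epos (h : CFD k x A B) (n : ℕ) : 0 < en k B (n + 1) :=
  h.e1pos.trans_le (h.emono (by omega))

lemma Epos (h : CFD k x A B) (n : ℕ) : 0 < En B (n + 1) := by
  have h1 := h.epos n
  have h2 := h.Kpos (n + 1)
  have : En B (n + 1) = en k B (n + 1) * Kp k (n + 1) := by
    rw [en]; field_simp
  rw [this]; positivity

lemma Ele (B : ℕ → ℂ) (n : ℕ) : En B n ≤ ‖B (n + 1)‖ * ‖B n‖ := by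
  have : En B n = (B (n + 1) * (starRingEnd ℂ) (B n)).re := by
    simp [En]
  rw [this]
  refine (Complex.re_le_norm _).trans ?_
  simp

lemma Bne (h : CFD k x A B) (n : ℕ) : B (n + 1) ≠ 0 := by
  intro h0
  have := h.Epos n
  simp [En, h0] at this

lemma estep (h : CFD k x A B) (n : ℕ) :
    en k B n + x.re * en k B 1 / ((n : ℝ) + 2) ≤ en k B (n + 2) := by
  have hK1 := h.Kpos (n + 1)
  have hk := h.kpos (n + 1)
  have hx := h.hx
  have e1 := h.esucc n
  have e2 := h.esucc (n + 1)
  set d0 := x.re * ‖B (n + 1)‖ ^ 2 / Kp k (n + 1) with hd0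
  set d1 := x.re * ‖B (n + 1 + 1)‖ ^ 2 / Kp k (n + 1 + 1) with hd1
  have hd0n : 0 ≤ d0 := by positivity
  have hd1n : 0 ≤ d1 := by
    have := h.Kpos (n + 1 + 1)
    positivity
  have key : (x.re * en k B 1 / ((n : ℝ) + 2)) ^ 2 ≤ d0 * d1 := by
    have hp : d0 * d1 = (x.re * (‖B (n + 1 + 1)‖ * ‖B (n + 1)‖) / Kp k (n + 1)) ^ 2 / k (n + 1 + 1) := by
      rw [hd0, hd1, Ksucc k (n + 1)]
      field_simp
    rw [hp]
    have hle : x.re * en k B 1 ≤ x.re * (‖B (n + 1 + 1)‖ * ‖B (n + 1)‖) / Kp k (n + 1) := by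
      have a1 : en k B 1 ≤ en k B (n + 1) := h.emono (by omega)
      have a2 : en k B (n + 1) ≤ (‖B (n + 1 + 1)‖ * ‖B (n + 1)‖) / Kp k (n + 1) := by
        rw [en]
        gcongr
        exact Ele B (n + 1)
      rw [mul_div_assoc]
      gcongr
      exact a1.trans a2
    have hkl := h.kle (n + 1)
    push_cast at hkl
    rw [div_pow]
    have := h.e1pos
    gcongr
    calc k (n + 1 + 1) ≤ ((n : ℝ) + 1 + 1) ^ 2 := hkl
      _ = ((n : ℝ) + 2) ^ 2 := by ring
  have : x.re * en k B 1 / ((n : ℝ) + 2) ≤ d0 + d1 := by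
    apply le_of_sq_le_sq _ (by positivity) 
    nlinarith [sq_nonneg (d0 - d1), mul_nonneg hd0n hd1n]
  rw [show n + 2 = n + 1 + 1 from rfl, e2, e1]
  linarith

lemma etend (h : CFD k x A B) : Tendsto (en k B) atTop atTop := by
  have hc : 0 < x.re * en k B 1 := mul_pos h.hx h.e1pos
  set c := x.re * en k B 1 with hcdef
  have hs : ∀ n : ℕ, c * (∑ i ∈ Finset.range n, 1 / ((i : ℝ) + 1)) ≤ c + 2 * en k B (n + 1) := by
    have hs' : ∀ n : ℕ, c * (∑ i ∈ Finset.range (n + 1), 1 / ((i : ℝ) + 1)) ≤ c + en k B n + en k B (n + 1) := by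
      intro n
      induction n with
      | zero => 
        have := h.e1pos
        simp [h.e0]; linarith
      | succ n ih =>
        rw [Finset.sum_range_succ]
        have := h.estep n
        rw [mul_add]
        have h3 : c * (1 / (((n + 1 : ℕ) : ℝ) + 1)) = c / ((n : ℝ) + 2) := by
          push_cast
          rw [mul_one_div]; congr 1; ring
        rw [h3]
        rw [show n + 1 + 1 = n + 2 from rfl]
        linarith
    intro n
    have h1 := hs' n
    rw [Finset.sum_range_succ, mul_add] at h1
    have h2 : 0 ≤ c * (1 / ((n : ℝ) + 1)) := by positivity
    have h3 : en k B n ≤ en k B (n + 1) := h.emono (by omega)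
    linarith
  have ht : Tendsto (fun n : ℕ => c * (∑ i ∈ Finset.range n, 1 / ((i : ℝ) + 1))) atTop atTop :=
    Tendsto.const_mul_atTop hc Real.tendsto_sum_range_one_div_nat_succ_atTop
  rw [← tendsto_add_atTop_iff_nat 1]
  have h4 : Tendsto (fun n : ℕ => (1 / 2 : ℝ) * (c * (∑ i ∈ Finset.range n, 1 / ((i : ℝ) + 1)) + (- c))) atTop atTop :=
    Tendsto.const_mul_atTop (by norm_num) (tendsto_atTop_add_const_right _ _ ht)
  refine tendsto_atTop_mono (fun n => ?_) h4
  have := hs n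
  linarith

lemma det (h : CFD k x A B) (n : ℕ) : ‖A n * B (n + 1) - A (n + 1) * B n‖ = Kp k n := by
  induction n with
  | zero => simp [h.A0, h.B0, h.B1, Kp]
  | succ n ih =>
    have : A (n + 1) * B (n + 1 + 1) - A (n + 1 + 1) * B (n + 1)
       = -(k (n + 1) : ℂ) * (A n * B (n + 1) - A (n + 1) * B n) := by
      rw [show n + 1 + 1 = n + 2 from rfl, h.AR, h.BR]; ring
    rw [this, norm_mul, ih, Ksucc, norm_neg, Complex.norm_real, Real.norm_of_nonneg (h.kpos n).le]
    ring

/-- modified approximants -/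
noncomputable def Sw (A B : ℕ → ℂ) (n : ℕ) (w : ℂ) : ℂ :=
  (A (n + 1) + w * A n) / (B (n + 1) + w * B n)

lemma key (_h : CFD k x A B) (n : ℕ) (w : ℂ) (hw : 0 ≤ w.re) :
    ‖w‖ * En B (n + 1) ≤ ‖B (n + 2)‖ * ‖B (n + 2) + w * B (n + 1)‖ := by
  by_cases h0 : w = 0
  · simp [h0]; positivity
  have hw0 : 0 < ‖w‖ := norm_pos_iff.mpr h0
  have h1 : ‖w‖ ^ 2 * En B (n + 1) ≤ ((B (n + 2) + w * B (n + 1)) * ((starRingEnd ℂ) w * (starRingEnd ℂ) (B (n + 2)))).re := by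
    have : ((B (n + 2) + w * B (n + 1)) * ((starRingEnd ℂ) w * (starRingEnd ℂ) (B (n + 2)))).re
      = w.re * ‖B (n + 2)‖ ^ 2 + ‖w‖ ^ 2 * En B (n + 1) := by
      rw [Complex.sq_norm, Complex.sq_norm, Complex.normSq_apply, Complex.normSq_apply]
      simp [En]
      ring
    rw [this]
    have : 0 ≤ w.re * ‖B (n + 2)‖ ^ 2 := by positivity
    linarith
  have h2 := h1.trans (Complex.re_le_norm _)
  simp only [norm_mul, Complex.norm_conj] at h2
  have h3 : ‖w‖ * (‖w‖ * En B (n + 1)) ≤ ‖w‖ * (‖B (n + 2)‖ * ‖B (n + 2) + w * B (n + 1)‖) := by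
    linarith
  exact le_of_mul_le_mul_left h3 hw0

lemma den_ne (h : CFD k x A B) (n : ℕ) (w : ℂ) (hw : 0 ≤ w.re) :
    B (n + 1) + w * B n ≠ 0 := by
  rcases n with _ | n
  · simp [h.B0, h.B1]
  intro h0
  have h1 := h.key n w hw
  rw [h0] at h1
  simp only [norm_zero, mul_zero] at h1
  have h2 := h.Epos n
  have h3 : ‖w‖ = 0 := by
    by_contra h4
    have : 0 < ‖w‖ := lt_of_le_of_ne (norm_nonneg _) (Ne.symm h4)
    have := mul_pos this h2
    linarith
  have h4 : w = 0 := norm_eq_zero.mp h3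
  rw [h4] at h0
  simp at h0
  exact h.Bne (n + 1) h0

lemma Sdist (h : CFD k x A B) (n : ℕ) (w : ℂ) (hw : 0 ≤ w.re) :
    ‖Sw A B (n + 1) w - A (n + 2) / B (n + 2)‖ ≤ 1 / en k B (n + 1) := by
  have d1 := h.den_ne (n + 1) w hw
  have d2 : B (n + 2) ≠ 0 := h.Bne (n + 1)
  rw [show n + 1 + 1 = n + 2 from rfl] at d1
  have e : Sw A B (n + 1) w - A (n + 2) / B (n + 2) =
     w * (A (n + 1) * B (n + 1 + 1) - A (n + 1 + 1) * B (n + 1)) / (B (n + 2) * (B (n + 2) + w * B (n + 1))) := by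
    rw [Sw, show n + 1 + 1 = n + 2 from rfl]
    field_simp
    ring
  rw [e, norm_div, norm_mul, h.det, norm_mul, en, one_div_div]
  have hE := h.Epos n
  have hp : 0 < ‖B (n + 2)‖ * ‖B (n + 2) + w * B (n + 1)‖ := by positivity
  rw [div_le_div_iff₀ hp hE]
  have := mul_le_mul_of_nonneg_left (h.key n w hw) (h.Kpos (n + 1)).le
  linarith

lemma Sstep (h : CFD k x A B) (n : ℕ) (w : ℂ) (hw : 0 ≤ w.re) :
    0 ≤ ((k (n + 1) : ℂ) / (x + w)).re ∧ Sw A B (n + 1) w = Sw A B n ((k (n + 1) : ℂ) / (x + w)) := by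
  have hx := h.hx
  have hre : 0 < (x + w).re := by simp; linarith
  have hne : x + w ≠ 0 := by
    intro h0; rw [h0] at hre; simp at hre
  have hk := h.kpos n
  have hr : 0 ≤ ((k (n + 1) : ℂ) / (x + w)).re := by
    rw [Complex.div_re]
    simp only [Complex.ofReal_re, Complex.ofReal_im]
    have := Complex.normSq_nonneg (x + w)
    simp only [zero_mul, zero_div, add_zero]
    positivity
  refine ⟨hr, ?_⟩
  have d1 := h.den_ne (n + 1) w hw
  have d2 := h.den_ne n _ hr
  have ea : A (n + 2) + w * A (n + 1) = (x + w) * (A (n + 1) + (k (n + 1) : ℂ) / (x + w) * A n) := by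
    rw [h.AR]; field_simp; ring
  have eb : B (n + 2) + w * B (n + 1) = (x + w) * (B (n + 1) + (k (n + 1) : ℂ) / (x + w) * B n) := by
    rw [h.BR]; field_simp; ring
  rw [Sw, Sw, show n + 1 + 1 = n + 2 from rfl, ea, eb, mul_div_mul_left _ _ hne]

lemma Snest (h : CFD k x A B) (n m : ℕ) : ∀ w : ℂ, 0 ≤ w.re →
    ∃ w' : ℂ, 0 ≤ w'.re ∧ Sw A B (n + m) w = Sw A B n w' := by
  induction m with
  | zero => intro w hw; exact ⟨w, hw, rfl⟩
  | succ m ih =>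
    intro w hw
    obtain ⟨h1, h2⟩ := h.Sstep (n + m) w hw
    obtain ⟨w', h3, h4⟩ := ih _ h1
    exact ⟨w', h3, by rw [← h4, ← h2]; rfl⟩

lemma cdist (h : CFD k x A B) (n m : ℕ) :
    ‖A (n + m + 2) / B (n + m + 2) - A (n + 2) / B (n + 2)‖ ≤ 1 / en k B (n + 1) := by
  obtain ⟨w, h1, h2⟩ := h.Snest (n + 1) m 0 (by simp)
  have := h.Sdist n w h1
  rw [← h2] at this
  have e1 : Sw A B (n + 1 + m) 0 = A (n + m + 2) / B (n + m + 2) := by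
    rw [Sw, show n + 1 + m + 1 = n + m + 2 by omega]
    simp only [zero_mul, add_zero]
  rwa [e1] at this

lemma exists_lim (h : CFD k x A B) :
    ∃ v : ℂ, Tendsto (fun n => A n / B n) atTop (nhds v) := by
  have : CauchySeq (fun n => A (n + 2) / B (n + 2)) := by
    apply cauchySeq_of_le_tendsto_0' (fun n => 1 / en k B (n + 1))
    · intro n m hnm
      obtain ⟨j, rfl⟩ := Nat.exists_eq_add_of_le hnm
      rw [dist_comm, dist_eq_norm]
      exact h.cdist n j
    · have := (tendsto_add_atTop_iff_nat 1).mpr h.etend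
      simp only [one_div]; exact this.inv_tendsto_atTop
  obtain ⟨v, hv⟩ := cauchySeq_tendsto_of_complete this
  exact ⟨v, (tendsto_add_atTop_iff_nat 2).mp hv⟩

lemma Slim (h : CFD k x A B) {v : ℂ} (hv : Tendsto (fun n => A n / B n) atTop (nhds v))
    (w : ℕ → ℂ) (hw : ∀ᶠ n in atTop, 0 ≤ (w n).re) :
    Tendsto (fun n => Sw A B n (w n)) atTop (nhds v) := by
  rw [← tendsto_add_atTop_iff_nat 1]
  have hv2 := (tendsto_add_atTop_iff_nat 2).mpr hv
  have h0 : Tendsto (fun n => Sw A B (n + 1) (w (n + 1)) - A (n + 2) / B (n + 2)) atTop (nhds 0) := by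
    have he : Tendsto (fun n => 1 / en k B (n + 1)) atTop (nhds 0) := by
      have := (tendsto_add_atTop_iff_nat 1).mpr h.etend
      simp only [one_div]; exact this.inv_tendsto_atTop
    refine squeeze_zero_norm' ?_ he
    filter_upwards [(tendsto_add_atTop_nat 1).eventually hw] with n hn
    exact h.Sdist n _ hn
  have := h0.add hv2
  simpa using this

lemma lim_bound (h : CFD k x A B) {v : ℂ} (hv : Tendsto (fun n => A n / B n) atTop (nhds v)) :
    ‖v - x / 2‖ ≤ k 1 / x.re ∧ v ≠ 0 := by
  have hrep : ∀ n : ℕ, ∃ w : ℂ, 0 ≤ w.re ∧ A (n + 2) / B (n + 2) = x / 2 + k 1 / (x + w) := by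
    intro n
    obtain ⟨w, h1, h2⟩ := h.Snest 1 n 0 (by simp)
    refine ⟨w, h1, ?_⟩
    obtain ⟨h3, h4⟩ := h.Sstep 0 w h1
    simp only [zero_add] at h4
    rw [h4] at h2
    have e1 : Sw A B (1 + n) 0 = A (n + 2) / B (n + 2) := by
      rw [Sw]
      simp only [zero_mul, add_zero]
      congr 2 <;> omega
    rw [← e1, h2, Sw]
    simp [h.A0, h.A1, h.B0, h.B1]
  have hx := h.hx
  have hk : 0 < k 1 := h.kpos 0
  have hv2 := (tendsto_add_atTop_iff_nat 2).mpr hv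
  constructor
  · have ht : Tendsto (fun n => ‖A (n + 2) / B (n + 2) - x / 2‖) atTop (nhds ‖v - x / 2‖) :=
      (hv2.sub_const _).norm
    refine le_of_tendsto' ht (fun n => ?_)
    obtain ⟨w, h1, h2⟩ := hrep n
    rw [h2, add_sub_cancel_left, norm_div, Complex.norm_real, Real.norm_of_nonneg hk.le]
    have : x.re ≤ ‖x + w‖ := by
      refine le_trans ?_ (Complex.re_le_norm _)
      simp; exact h1
    gcongr
  · have ht : Tendsto (fun n => (A (n + 2) / B (n + 2)).re) atTop (nhds v.re) :=
      (Complex.continuous_re.tendsto v).comp hv2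
    have : x.re / 2 ≤ v.re := by
      refine ge_of_tendsto' ht (fun n => ?_)
      obtain ⟨w, h1, h2⟩ := hrep n
      have h3 := (h.Sstep 0 w h1).1
      simp only [zero_add] at h3
      rw [h2, Complex.add_re]
      have : (x / 2).re = x.re / 2 := by simp
      linarith
    intro h0
    rw [h0] at this
    simp at this
    linarith

end CFD

noncomputable def kR (α β : ℝ) : ℕ → ℝ := fun n =>
  if n % 2 = 0 then
    ((n : ℝ) - α - β) * ((n : ℝ) - 1 + α) * ((n : ℝ) - 1 + β) / (4 * ((n : ℝ) - 1))
  else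
    ((n : ℝ) - 1 + α + β) * ((n : ℝ) - α) * ((n : ℝ) - β) / (4 * (n : ℝ))

lemma aSeq_eq (α β : ℝ) (n : ℕ) : aSeq α β n = (kR α β n : ℂ) := by
  unfold aSeq kR
  split_ifs <;> push_cast <;> ring

lemma kR_odd (α β : ℝ) (m : ℕ) : kR α β (2 * m + 1) =
    (2 * m + α + β) * (2 * m + 1 - α) * (2 * m + 1 - β) / (4 * (2 * m + 1)) := by
  unfold kR
  rw [if_neg (by omega)]
  push_cast
  congr 1; ring

lemma kR_even (α β : ℝ) (m : ℕ) : kR α β (2 * m + 2) =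
    (2 * m + 2 - α - β) * (2 * m + 1 + α) * (2 * m + 1 + β) / (4 * (2 * m + 1)) := by
  unfold kR
  rw [if_pos (by omega)]
  push_cast
  congr 1 <;> ring

lemma kR_pos (α β : ℝ) (hα0 : 0 < α) (hα1 : α < 1) (hβ0 : 0 < β) (hβ1 : β < 1) (n : ℕ) :
    0 < kR α β (n + 1) := by
  rcases Nat.even_or_odd' n with ⟨m, rfl | rfl⟩
  · rw [kR_odd]
    have hm : (0 : ℝ) ≤ m := Nat.cast_nonneg m
    have h1 : 0 < 2 * (m : ℝ) + 1 - α := by linarith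
    have h2 : 0 < 2 * (m : ℝ) + 1 - β := by linarith
    positivity
  · rw [show 2 * m + 1 + 1 = 2 * m + 2 from rfl, kR_even]
    have hm : (0 : ℝ) ≤ m := Nat.cast_nonneg m
    have h1 : 0 < 2 * (m : ℝ) + 2 - α - β := by linarith
    positivity

lemma kR_le (α β : ℝ) (hα0 : 0 < α) (hα1 : α < 1) (hβ0 : 0 < β) (hβ1 : β < 1) (n : ℕ) :
    kR α β (n + 1) ≤ ((n : ℝ) + 1) ^ 2 := by
  rcases Nat.even_or_odd' n with ⟨m, rfl | rfl⟩
  · rw [kR_odd]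
    have hm : (0 : ℝ) ≤ m := Nat.cast_nonneg m
    have h1 : 0 < 2 * (m : ℝ) + 1 - α := by linarith
    have h2 : 0 < 2 * (m : ℝ) + 1 - β := by linarith
    rw [div_le_iff₀ (by positivity)]
    push_cast
    calc (2 * (m : ℝ) + α + β) * (2 * m + 1 - α) * (2 * m + 1 - β)
        ≤ (4 * (2 * m + 1)) * (2 * m + 1) * (2 * m + 1) := by
          gcongr <;> linarith
      _ = _ := by ring
  · rw [show 2 * m + 1 + 1 = 2 * m + 2 from rfl, kR_even]
    have hm : (0 : ℝ) ≤ m := Nat.cast_nonneg m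
    have h1 : 0 < 2 * (m : ℝ) + 2 - α - β := by linarith
    rw [div_le_iff₀ (by positivity)]
    push_cast
    calc (2 * (m : ℝ) + 2 - α - β) * (2 * m + 1 + α) * (2 * m + 1 + β)
        ≤ (4 * (2 * m + 1)) * (2 * m + 2) * (2 * m + 2) := by
          have i1 : 2 * (m : ℝ) + 2 - α - β ≤ 4 * (2 * m + 1) := by linarith
          have i2 : 2 * (m : ℝ) + 1 + α ≤ 2 * m + 2 := by linarith
          have i3 : 2 * (m : ℝ) + 1 + β ≤ 2 * m + 2 := by linarith
          exact mul_le_mul (mul_le_mul i1 i2 (by positivity) (by positivity)) i3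
            (by positivity) (by positivity)
      _ = _ := by ring

lemma cfd (α β : ℝ) (hα0 : 0 < α) (hα1 : α < 1) (hβ0 : 0 < β) (hβ1 : β < 1)
    (x : ℂ) (hx : 0 < x.re) :
    CFD (kR α β) x (cfA (aSeq α β) (bSeq x)) (cfB (aSeq α β) (bSeq x)) where
  kpos := kR_pos α β hα0 hα1 hβ0 hβ1
  kle := kR_le α β hα0 hα1 hβ0 hβ1
  hx := hx
  A0 := rfl
  A1 := by simp [cfA, bSeq]
  AR := fun n => by rw [cfA, aSeq_eq]; simp [bSeq]
  B0 := rfl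
  B1 := rfl
  BR := fun n => by rw [cfB, aSeq_eq]; simp [bSeq]

noncomputable def lam (α β x : ℂ) : ℂ := (x + 1 - α) * (x + 1 - β) * (x + α + β) / 8

noncomputable def muc (α β x : ℂ) : ℂ := (x + 1 + α) * (x + 1 + β) * (x + 2 - α - β) / 8

noncomputable def pc (α β x : ℂ) (n : ℕ) : ℂ :=
  if n % 2 = 0 then muc α β x + (x + 1) * n * (n + 2 + x) / 4
  else lam α β x + (x + 1) * (n + 1) * (n + 1 + x) / 4

noncomputable def gc (x : ℂ) (n : ℕ) : ℂ := (n + 1) * (x + 1) / 2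

lemma two_m_ne (m : ℕ) : (2 * (m : ℂ) + 1) ≠ 0 := by
  have : ((2 * m + 1 : ℕ) : ℂ) ≠ 0 := Nat.cast_ne_zero.mpr (by omega)
  push_cast at this; exact this

lemma two_m_ne3 (m : ℕ) : (2 * (m : ℂ) + 3) ≠ 0 := by
  have : ((2 * m + 3 : ℕ) : ℂ) ≠ 0 := Nat.cast_ne_zero.mpr (by omega)
  push_cast at this; exact this

lemma kC_odd (α β : ℝ) (m : ℕ) : (kR α β (2 * m + 1) : ℂ) =
    (2 * m + α + β) * (2 * m + 1 - α) * (2 * m + 1 - β) / (4 * (2 * m + 1)) := by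
  rw [kR_odd]; push_cast; rfl

lemma kC_even (α β : ℝ) (m : ℕ) : (kR α β (2 * m + 2) : ℂ) =
    (2 * m + 2 - α - β) * (2 * m + 1 + α) * (2 * m + 1 + β) / (4 * (2 * m + 1)) := by
  rw [kR_even]; push_cast; rfl

lemma pc_even (α β x : ℂ) (m : ℕ) : pc α β x (2 * m) =
    muc α β x + (x + 1) * (2 * m) * (2 * m + 2 + x) / 4 := by
  rw [pc, if_pos (by omega)]; push_cast; rfl

lemma pc_odd (α β x : ℂ) (m : ℕ) : pc α β x (2 * m + 1) =
    lam α β x + (x + 1) * (2 * m + 2) * (2 * m + 2 + x) / 4 := by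
  rw [pc, if_neg (by omega)]; push_cast; ring

lemma id1 (α β : ℝ) (x : ℂ) (n : ℕ) :
    pc α β x (n + 2) * x + kR α β (n + 3) * gc x (n + 2)
      = (x + 2) * pc α β x (n + 1) + kR α β (n + 2) * gc x n := by
  rcases Nat.even_or_odd' n with ⟨m, rfl | rfl⟩
  · rw [show 2 * m + 2 = 2 * (m + 1) by ring, show 2 * m + 3 = 2 * (m + 1) + 1 by ring,
      pc_even, pc_odd, kC_odd, show 2 * (m + 1) = 2 * m + 2 by ring, kC_even, gc, gc, lam, muc]
    push_cast
    have h1 := two_m_ne m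
    have h3 := two_m_ne3 m
    have h4 : (2 * ((m : ℂ) + 1) + 1) ≠ 0 := by
      convert h3 using 1; ring
    have h5 : (2 * (m : ℂ) + 2 + 1) ≠ 0 := by
      convert h3 using 1; ring
    field_simp
    ring
  · rw [show 2 * m + 1 + 2 = 2 * (m + 1) + 1 by ring, show 2 * m + 1 + 3 = 2 * (m + 1) + 2 by ring,
      show 2 * m + 1 + 1 = 2 * (m + 1) by ring, kC_odd, kC_even, pc_even, pc_odd, gc, gc, lam, muc]
    push_cast
    have h3 := two_m_ne3 m
    have h4 : (2 * ((m : ℂ) + 1) + 1) ≠ 0 := by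
      convert h3 using 1; ring
    field_simp
    ring

lemma id2 (α β : ℝ) (x : ℂ) (n : ℕ) :
    pc α β x (n + 2) = (x + 2) * gc x (n + 1) + pc α β x n - x * gc x n := by
  rcases Nat.even_or_odd' n with ⟨m, rfl | rfl⟩
  · rw [show 2 * m + 2 = 2 * (m + 1) by ring, pc_even, pc_even, gc, gc]
    push_cast
    ring
  · rw [show 2 * m + 1 + 2 = 2 * (m + 1) + 1 by ring, pc_odd, pc_odd, gc, gc]
    push_cast
    ring

/-- The intertwining: solutions at `x` are mapped to solutions at `x + 2`. -/
lemma intertwine (α β : ℝ) (x c : ℂ) (u u' : ℕ → ℂ)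
    (hu : ∀ n, u (n + 2) = x * u (n + 1) + kR α β (n + 1) * u n)
    (hu' : ∀ n, u' (n + 2) = (x + 2) * u' (n + 1) + kR α β (n + 1) * u' n)
    (h0 : c * u' 1 = pc α β x 0 * u 1 + kR α β 1 * gc x 0 * u 0)
    (h1 : c * u' 2 = pc α β x 1 * u 2 + kR α β 2 * gc x 1 * u 1) (n : ℕ) :
    c * u' (n + 1) = pc α β x n * u (n + 1) + kR α β (n + 1) * gc x n * u n := by
  induction n using Nat.twoStepInduction with
  | zero => exact h0
  | one => exact h1
  | more n ih1 ih2 =>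
    have e1 := id1 α β x n
    have e2 := id2 α β x n
    have r0 := hu n
    have r1 := hu (n + 1)
    have r2 := hu' (n + 1)
    simp only [show n + 1 + 2 = n + 3 from rfl, show n + 1 + 1 = n + 2 from rfl] at *
    rw [r2, mul_add, mul_left_comm, ih2, mul_left_comm, ih1, r1]
    linear_combination (-u (n + 2)) * e1 - (kR α β (n + 2) : ℂ) * u (n + 1) * e2 - (kR α β (n + 2) : ℂ) * gc x n * r0

lemma shiftA (α β : ℝ) (hα0 : 0 < α) (hα1 : α < 1) (hβ0 : 0 < β) (hβ1 : β < 1)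
    (x : ℂ) (hx : 0 < x.re) (n : ℕ) :
    lam α β x * cfA (aSeq α β) (bSeq (x + 2)) (n + 1) =
      pc α β x n * cfA (aSeq α β) (bSeq x) (n + 1)
        + kR α β (n + 1) * gc x n * cfA (aSeq α β) (bSeq x) n := by
  have h := cfd α β hα0 hα1 hβ0 hβ1 x hx
  have h' := cfd α β hα0 hα1 hβ0 hβ1 (x + 2) (by simp; linarith)
  have k1 := kC_odd α β 0
  have k2 := kC_even α β 0
  have p0 := pc_even α β x 0
  have p1 := pc_odd α β x 0
  simp only [mul_zero, zero_add] at k1 k2 p0 p1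
  apply intertwine α β x _ _ _ h.AR h'.AR
  · rw [h.A0, h.A1, h'.A1, k1, p0, gc, lam, muc]
    push_cast
    ring
  · rw [h.AR, h'.AR, h.A0, h.A1, h'.A1, h'.A0, k1, k2, p1, gc, lam]
    push_cast
    ring

lemma shiftB (α β : ℝ) (hα0 : 0 < α) (hα1 : α < 1) (hβ0 : 0 < β) (hβ1 : β < 1)
    (x : ℂ) (hx : 0 < x.re) (n : ℕ) :
    muc α β x * cfB (aSeq α β) (bSeq (x + 2)) (n + 1) =
      pc α β x n * cfB (aSeq α β) (bSeq x) (n + 1)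
        + kR α β (n + 1) * gc x n * cfB (aSeq α β) (bSeq x) n := by
  have h := cfd α β hα0 hα1 hβ0 hβ1 x hx
  have h' := cfd α β hα0 hα1 hβ0 hβ1 (x + 2) (by simp; linarith)
  have k1 := kC_odd α β 0
  have k2 := kC_even α β 0
  have p0 := pc_even α β x 0
  have p1 := pc_odd α β x 0
  simp only [mul_zero, zero_add] at k1 k2 p0 p1
  apply intertwine α β x _ _ _ h.BR h'.BR
  · rw [h.B0, h.B1, h'.B1, k1, p0, gc, muc]
    push_cast
    ring
  · rw [h.BR, h'.BR, h.B0, h.B1, h'.B1, h'.B0, k1, k2, p1, gc, lam, muc]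
    push_cast
    ring

lemma ne_of_re_pos {z : ℂ} (h : 0 < z.re) : z ≠ 0 := by
  intro h0; rw [h0] at h; simp at h

lemma lam_ne (α β : ℝ) (hα0 : 0 < α) (hα1 : α < 1) (hβ0 : 0 < β) (hβ1 : β < 1)
    (x : ℂ) (hx : 0 < x.re) : lam α β x ≠ 0 := by
  have h1 : x + 1 - α ≠ 0 := ne_of_re_pos (by simp; linarith)
  have h2 : x + 1 - β ≠ 0 := ne_of_re_pos (by simp; linarith)
  have h3 : x + α + β ≠ 0 := ne_of_re_pos (by simp; linarith)
  simp [lam, h1, h2, h3]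

lemma muc_ne (α β : ℝ) (hα0 : 0 < α) (hα1 : α < 1) (hβ0 : 0 < β) (hβ1 : β < 1)
    (x : ℂ) (hx : 0 < x.re) : muc α β x ≠ 0 := by
  have h1 : x + 1 + α ≠ 0 := ne_of_re_pos (by simp; linarith)
  have h2 : x + 1 + β ≠ 0 := ne_of_re_pos (by simp; linarith)
  have h3 : x + 2 - α - β ≠ 0 := ne_of_re_pos (by simp; linarith)
  simp [muc, h1, h2, h3]

/-- `p_n / (x+1)` has positive real part eventually. -/
lemma pc_re (α β : ℝ) (x : ℂ) (hx : 0 < x.re) :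
    ∀ᶠ n in atTop, 0 < (pc α β x n / (x + 1)).re := by
  have hx1 : x + 1 ≠ 0 := ne_of_re_pos (by simp; linarith)
  have hl : ∀ C : ℝ, ∀ᶠ n : ℕ in atTop, 0 < C + (n : ℝ) / 4 := by
    intro C
    have : Tendsto (fun n : ℕ => C + (n : ℝ) / 4) atTop atTop :=
      tendsto_atTop_add_const_left _ _ (tendsto_natCast_atTop_atTop.atTop_div_const (by norm_num))
    exact this.eventually_gt_atTop 0
  filter_upwards [hl (muc α β x / (x + 1)).re, hl (lam α β x / (x + 1)).re] with n h1 h2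
  have hn : (0 : ℝ) ≤ n := Nat.cast_nonneg n
  have hnx : 0 ≤ (n : ℝ) * x.re := by positivity
  have hnn : (0 : ℝ) ≤ n * n := by positivity
  rw [pc]
  split_ifs
  · have : (muc α β x + (x + 1) * n * (n + 2 + x) / 4) / (x + 1)
        = muc α β x / (x + 1) + (((n : ℝ) / 4 : ℝ) : ℂ) * (n + 2 + x) := by
      push_cast
      field_simp
    rw [this, Complex.add_re, Complex.re_ofReal_mul]
    simp only [Complex.add_re, Complex.natCast_re, Complex.re_ofNat]
    nlinarith
  · have : (lam α β x + (x + 1) * (n + 1) * (n + 1 + x) / 4) / (x + 1)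
        = lam α β x / (x + 1) + ((((n : ℝ) + 1) / 4 : ℝ) : ℂ) * (n + 1 + x) := by
      push_cast
      field_simp
    rw [this, Complex.add_re, Complex.re_ofReal_mul]
    simp only [Complex.add_re, Complex.natCast_re, Complex.one_re]
    nlinarith

lemma funcEq (α β : ℝ) (hα0 : 0 < α) (hα1 : α < 1) (hβ0 : 0 < β) (hβ1 : β < 1)
    (x : ℂ) (hx : 0 < x.re) (v v' : ℂ)
    (hv : Tendsto (fun n => cfA (aSeq α β) (bSeq x) n / cfB (aSeq α β) (bSeq x) n) atTop (nhds v))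
    (hv' : Tendsto (fun n => cfA (aSeq α β) (bSeq (x + 2)) n / cfB (aSeq α β) (bSeq (x + 2)) n)
      atTop (nhds v')) :
    lam α β x * v' = muc α β x * v := by
  have h := cfd α β hα0 hα1 hβ0 hβ1 x hx
  have h' := cfd α β hα0 hα1 hβ0 hβ1 (x + 2) (by simp; linarith)
  have hx1 : x + 1 ≠ 0 := ne_of_re_pos (by simp; linarith)
  have hmu := muc_ne α β hα0 hα1 hβ0 hβ1 x hx
  have hp := pc_re α β x hx
  have hw : ∀ᶠ n in atTop, 0 ≤ ((kR α β (n + 1) : ℂ) * gc x n / pc α β x n).re := by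
    filter_upwards [hp] with n hn
    have hk := h.kpos n
    have e : (kR α β (n + 1) : ℂ) * gc x n / pc α β x n
        = ((kR α β (n + 1) * (n + 1) / 2 : ℝ) : ℂ) * (pc α β x n / (x + 1))⁻¹ := by
      rw [gc, inv_div]
      push_cast
      ring
    rw [e, Complex.re_ofReal_mul, Complex.inv_re]
    have := Complex.normSq_nonneg (pc α β x n / (x + 1))
    positivity
  have hS := h.Slim hv _ hw
  have hv1 := ((tendsto_add_atTop_iff_nat 1).mpr hv').const_mul (lam α β x / muc α β x)
  have heq : (fun n => lam α β x / muc α β x * (cfA (aSeq α β) (bSeq (x + 2)) (n + 1) / cfB (aSeq α β) (bSeq (x + 2)) (n + 1)))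
      =ᶠ[atTop] (fun n => CFD.Sw (cfA (aSeq α β) (bSeq x)) (cfB (aSeq α β) (bSeq x)) n ((kR α β (n + 1) : ℂ) * gc x n / pc α β x n)) := by
    filter_upwards [hp] with n hn
    have hpn : pc α β x n ≠ 0 := by
      intro h0; rw [h0] at hn; simp at hn
    rw [div_mul_div_comm, shiftA α β hα0 hα1 hβ0 hβ1 x hx, shiftB α β hα0 hα1 hβ0 hβ1 x hx, CFD.Sw]
    symm
    rw [← mul_div_mul_left _ _ hpn]
    congr 1 <;> field_simp
  have := tendsto_nhds_unique (hv1.congr' heq) hS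
  rw [← this]
  field_simp

lemma Gamma_shift (z : ℂ) (hz : 0 < z.re) (n : ℕ) :
    Complex.Gamma (z + n) = Complex.Gamma z * ∏ j ∈ Finset.range n, (z + j) := by
  induction n with
  | zero => simp
  | succ n ih =>
    have hne : z + n ≠ 0 := ne_of_re_pos (by simp; positivity)
    push_cast
    rw [← add_assoc, Complex.Gamma_add_one _ hne, ih, Finset.prod_range_succ]
    ring

lemma Gamma_asymp (z : ℂ) (hz : 0 < z.re) :
    Tendsto (fun n : ℕ => Complex.Gamma (z + (n + 1 : ℕ)) / ((n : ℂ) ^ z * (n.factorial : ℂ)))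
      atTop (nhds 1) := by
  have hG := Complex.Gamma_ne_zero_of_re_pos hz
  have h := (Complex.GammaSeq_tendsto_Gamma z).inv₀ hG
  have h2 := h.const_mul (Complex.Gamma z)
  rw [mul_inv_cancel₀ hG] at h2
  refine h2.congr (fun n => ?_)
  rw [Gamma_shift z hz, Complex.GammaSeq, inv_div, mul_div_assoc]

lemma ratio_asymp (a b c a' b' c' : ℂ) (ha : 0 < a.re) (hb : 0 < b.re) (hc : 0 < c.re)
    (ha' : 0 < a'.re) (hb' : 0 < b'.re) (hc' : 0 < c'.re) (hs : a' + b' + c' = a + b + c + 1) :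
    Tendsto (fun n : ℕ => (Complex.Gamma (a + (n + 1 : ℕ)) * Complex.Gamma (b + (n + 1 : ℕ)) *
        Complex.Gamma (c + (n + 1 : ℕ))) / (Complex.Gamma (a' + (n + 1 : ℕ)) *
        Complex.Gamma (b' + (n + 1 : ℕ)) * Complex.Gamma (c' + (n + 1 : ℕ))) * n) atTop (nhds 1) := by
  have h := (((Gamma_asymp a ha).mul (Gamma_asymp b hb)).mul (Gamma_asymp c hc)).div
    (((Gamma_asymp a' ha').mul (Gamma_asymp b' hb')).mul (Gamma_asymp c' hc')) (by simp)
  simp only [mul_one, div_one] at h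
  refine h.congr' ?_
  filter_upwards [eventually_gt_atTop 0] with n hn
  rw [Pi.div_apply]
  have hn0 : (n : ℂ) ≠ 0 := Nat.cast_ne_zero.mpr hn.ne'
  have hf : (n.factorial : ℂ) ≠ 0 := Nat.cast_ne_zero.mpr (Nat.factorial_ne_zero n)
  have hp : ∀ z : ℂ, (n : ℂ) ^ z ≠ 0 := fun z => by
    rw [Complex.cpow_def_of_ne_zero hn0]; exact Complex.exp_ne_zero _
  have e : (n : ℂ) ^ a' * (n : ℂ) ^ b' * (n : ℂ) ^ c' = (n : ℂ) ^ a * (n : ℂ) ^ b * (n : ℂ) ^ c * n := by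
    rw [← Complex.cpow_add _ _ hn0, ← Complex.cpow_add _ _ hn0, ← Complex.cpow_add _ _ hn0,
      ← Complex.cpow_add _ _ hn0, hs, Complex.cpow_add _ _ hn0, Complex.cpow_one]
  have g : ∀ z : ℂ, 0 < z.re → Complex.Gamma (z + (n + 1 : ℕ)) ≠ 0 := fun z hz =>
    Complex.Gamma_ne_zero_of_re_pos (by
      simp only [Complex.add_re, Complex.natCast_re]; positivity)
  have g1 := g a' ha'
  have g2 := g b' hb'
  have g3 := g c' hc'
  have p1 := hp a
  have p2 := hp b
  have p3 := hp c
  have p1' := hp a'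
  have p2' := hp b'
  have p3' := hp c'
  generalize Complex.Gamma (a + (n + 1 : ℕ)) = A1 at *
  generalize Complex.Gamma (b + (n + 1 : ℕ)) = A2 at *
  generalize Complex.Gamma (c + (n + 1 : ℕ)) = A3 at *
  generalize Complex.Gamma (a' + (n + 1 : ℕ)) = A1' at *
  generalize Complex.Gamma (b' + (n + 1 : ℕ)) = A2' at *
  generalize Complex.Gamma (c' + (n + 1 : ℕ)) = A3' at *
  generalize (n : ℂ) ^ a = P1 at *
  generalize (n : ℂ) ^ b = P2 at *
  generalize (n : ℂ) ^ c = P3 at *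
  generalize (n : ℂ) ^ a' = P1' at *
  generalize (n : ℂ) ^ b' = P2' at *
  generalize (n : ℂ) ^ c' = P3' at *
  field_simp
  linear_combination (A1 * A2 * A3) * e

noncomputable def RG (α β : ℝ) (x : ℂ) : ℂ :=
  Complex.Gamma ((x - α + 1) / 2) * Complex.Gamma ((x + α + β) / 2) *
          Complex.Gamma ((x - β + 1) / 2) /
        (Complex.Gamma ((x + α + 1) / 2) * Complex.Gamma ((x - α - β + 2) / 2) *
          Complex.Gamma ((x + β + 1) / 2))

lemma RG_shift (α β : ℝ) (hα0 : 0 < α) (hα1 : α < 1) (hβ0 : 0 < β) (hβ1 : β < 1)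
    (x : ℂ) (hx : 0 < x.re) : muc α β x * RG α β (x + 2) = lam α β x * RG α β x := by
  have h1 : 0 < ((x - α + 1) / 2).re := by simp; linarith
  have h2 : 0 < ((x + α + β) / 2).re := by simp; linarith
  have h3 : 0 < ((x - β + 1) / 2).re := by simp; linarith
  have h4 : 0 < ((x + α + 1) / 2).re := by simp; linarith
  have h5 : 0 < ((x - α - β + 2) / 2).re := by simp; linarith
  have h6 : 0 < ((x + β + 1) / 2).re := by simp; linarith
  have hm := muc_ne α β hα0 hα1 hβ0 hβ1 x hx
  have g4 := Complex.Gamma_ne_zero_of_re_pos h4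
  have g5 := Complex.Gamma_ne_zero_of_re_pos h5
  have g6 := Complex.Gamma_ne_zero_of_re_pos h6
  rw [RG, RG, show (x + 2 - α + 1) / 2 = (x - α + 1) / 2 + 1 by ring,
    show (x + 2 + α + β) / 2 = (x + α + β) / 2 + 1 by ring,
    show (x + 2 - β + 1) / 2 = (x - β + 1) / 2 + 1 by ring,
    show (x + 2 + α + 1) / 2 = (x + α + 1) / 2 + 1 by ring,
    show (x + 2 - α - β + 2) / 2 = (x - α - β + 2) / 2 + 1 by ring,
    show (x + 2 + β + 1) / 2 = (x + β + 1) / 2 + 1 by ring,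
    Complex.Gamma_add_one _ (ne_of_re_pos h1), Complex.Gamma_add_one _ (ne_of_re_pos h2),
    Complex.Gamma_add_one _ (ne_of_re_pos h3), Complex.Gamma_add_one _ (ne_of_re_pos h4),
    Complex.Gamma_add_one _ (ne_of_re_pos h5), Complex.Gamma_add_one _ (ne_of_re_pos h6)]
  have em : muc α β x = (x + α + 1) / 2 * ((x - α - β + 2) / 2) * ((x + β + 1) / 2) := by
    rw [muc]; ring
  have el : lam α β x = (x - α + 1) / 2 * ((x + α + β) / 2) * ((x - β + 1) / 2) := by
    rw [lam]; ring
  have n4 := ne_of_re_pos h4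
  have n5 := ne_of_re_pos h5
  have n6 := ne_of_re_pos h6
  rw [em, el]
  generalize (x + α + 1) / 2 = y4 at *
  generalize (x - α - β + 2) / 2 = y5 at *
  generalize (x + β + 1) / 2 = y6 at *
  field_simp

lemma RG_asymp (α β : ℝ) (hα0 : 0 < α) (hα1 : α < 1) (hβ0 : 0 < β) (hβ1 : β < 1)
    (x : ℂ) (hx : 0 < x.re) :
    Tendsto (fun n : ℕ => RG α β (x + 2 * (n + 1 : ℕ)) * n) atTop (nhds 1) := by
  have h1 : 0 < ((x - α + 1) / 2).re := by simp; linarith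
  have h2 : 0 < ((x + α + β) / 2).re := by simp; linarith
  have h3 : 0 < ((x - β + 1) / 2).re := by simp; linarith
  have h4 : 0 < ((x + α + 1) / 2).re := by simp; linarith
  have h5 : 0 < ((x - α - β + 2) / 2).re := by simp; linarith
  have h6 : 0 < ((x + β + 1) / 2).re := by simp; linarith
  have h := ratio_asymp _ _ _ _ _ _ h1 h2 h3 h4 h5 h6 (by ring)
  refine h.congr (fun n => ?_)
  rw [RG]
  generalize ((n + 1 : ℕ) : ℂ) = N
  congr 2
  · congr 1
    · congr 2 <;> ring
    · congr 1; ring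
  · congr 1
    · congr 2 <;> ring
    · congr 1; ring

theorem stmt4 (α β : ℝ) (hα0 : 0 < α) (hα1 : α < 1) (hβ0 : 0 < β) (hβ1 : β < 1)
    (x : ℂ) (hx : 0 < x.re) :
    ∃ v : ℂ, v ≠ 0 ∧ CFConvergesTo (aSeq α β) (bSeq x) v ∧
      Complex.Gamma ((x - α + 1) / 2) * Complex.Gamma ((x + α + β) / 2) *
          Complex.Gamma ((x - β + 1) / 2) /
        (Complex.Gamma ((x + α + 1) / 2) * Complex.Gamma ((x - α - β + 2) / 2) *
          Complex.Gamma ((x + β + 1) / 2)) = 1 / v := by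
  have hre : ∀ n : ℕ, 0 < (x + 2 * (n : ℂ)).re := fun n => by
    simp; positivity
  have hcf : ∀ n : ℕ, _ := fun n => cfd α β hα0 hα1 hβ0 hβ1 (x + 2 * (n : ℂ)) (hre n)
  choose V hV using fun n => (hcf n).exists_lim
  have hb := fun n => (hcf n).lim_bound (hV n)
  have hconst : ∀ n : ℕ, RG α β (x + 2 * (n : ℂ)) * V n = RG α β x * V 0 := by
    intro n
    induction n with
    | zero => simp
    | succ n ih =>
      rw [← ih]
      have e : x + 2 * ((n + 1 : ℕ) : ℂ) = x + 2 * (n : ℂ) + 2 := by push_cast; ring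
      have h1 := hV (n + 1)
      rw [e] at h1
      have f := funcEq α β hα0 hα1 hβ0 hβ1 _ (hre n) _ _ (hV n) h1
      have r := RG_shift α β hα0 hα1 hβ0 hβ1 _ (hre n)
      have m := muc_ne α β hα0 hα1 hβ0 hβ1 _ (hre n)
      have l := lam_ne α β hα0 hα1 hβ0 hβ1 _ (hre n)
      rw [e]
      apply mul_left_cancel₀ (mul_ne_zero m l)
      linear_combination lam α β (x + 2 * n) * V (n + 1) * r + lam α β (x + 2 * n) * RG α β (x + 2 * n) * f
  have hVas : Tendsto (fun n : ℕ => V (n + 1) / n) atTop (nhds 1) := by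
    have hninv : Tendsto (fun n : ℕ => (n : ℂ)⁻¹) atTop (nhds 0) :=
      tendsto_inv₀_cobounded.comp (tendsto_natCast_atTop_cobounded)
    have h1 : Tendsto (fun n : ℕ => (V (n + 1) - (x + 2 * ((n + 1 : ℕ) : ℂ)) / 2) * (n : ℂ)⁻¹)
        atTop (nhds 0) := by
      refine squeeze_zero_norm (a := fun n : ℕ => kR α β 1 / x.re * ‖(n : ℂ)⁻¹‖) ?_ ?_
      · intro n
        rw [norm_mul]
        have hk : 0 < kR α β 1 := kR_pos α β hα0 hα1 hβ0 hβ1 0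
        refine mul_le_mul_of_nonneg_right ((hb (n + 1)).1.trans ?_) (norm_nonneg _)
        have : x.re ≤ (x + 2 * ((n + 1 : ℕ) : ℂ)).re := by
          simp; positivity
        gcongr
      · have := hninv.norm.const_mul (kR α β 1 / x.re)
        simpa using this
    have h2 : Tendsto (fun n : ℕ => (x / 2 + 1) * (n : ℂ)⁻¹ + 1) atTop (nhds 1) := by
      have := (hninv.const_mul (x / 2 + 1)).add_const 1
      simpa using this
    have h3 := h1.add h2
    rw [zero_add] at h3
    refine h3.congr' ?_
    filter_upwards [eventually_gt_atTop 0] with n hn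
    have hn0 : (n : ℂ) ≠ 0 := Nat.cast_ne_zero.mpr hn.ne'
    push_cast
    field_simp
    ring
  have hone : RG α β x * V 0 = 1 := by
    have h1 := (RG_asymp α β hα0 hα1 hβ0 hβ1 x hx).mul hVas
    rw [one_mul] at h1
    have h2 : Tendsto (fun _ : ℕ => RG α β x * V 0) atTop (nhds 1) := by
      refine h1.congr' ?_
      filter_upwards [eventually_gt_atTop 0] with n hn
      have hn0 : (n : ℂ) ≠ 0 := Nat.cast_ne_zero.mpr hn.ne'
      rw [← hconst (n + 1)]
      field_simp
    exact tendsto_nhds_unique tendsto_const_nhds h2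
  have hx0 : x + 2 * ((0 : ℕ) : ℂ) = x := by simp
  have hV0 := hV 0
  have hc0 := hcf 0
  have hb0 := (hb 0).2
  rw [hx0] at hV0 hc0
  refine ⟨V 0, hb0, ⟨?_, hV0⟩, ?_⟩
  · filter_upwards [eventually_ge_atTop 1] with n hn
    obtain ⟨m, rfl⟩ := Nat.exists_eq_add_of_le' hn
    exact hc0.Bne m
  · rw [eq_div_iff hb0]
    exact hone
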